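/- arXiv:2205.01448 — 2 statements merged into one kernel-verified Lean document; each statement's English description precedes it below -/
import Mathlib

section
/- Let X ~ Hypergeometric(N, K, M), let 0 ≤ ℓ ≤ M be a real number with ℓ < K and M - ℓ < N - K. Put a = ℓ/M, b = K/N, x = M/N. If a ≤ (8/5)·b, (1-a) ≤ 2(1-b), x ≤ 1/4, and M·a·(1-a) ≥ 4, then Pr[X ≥ ℓ] ≥ √(π/320)·e^{-24}·e^{-6·(a-b)²·M/(b·(1-b))}. -/
noncomputable def hyPhi (A y : ℝ) : ℝ := (A - y) * Real.log (1 - y / A) + y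

lemma hyPhi_step {A d : ℝ} (hA : 0 < A) (hd : d + 1 ≤ A) :
    Real.exp (-(hyPhi A (d + 1) - hyPhi A d)) * A ≤ A - d := by
  have hz : 0 < 1 - d / A := by
    rw [sub_pos, div_lt_one hA]; linarith
  have key : -(hyPhi A (d + 1) - hyPhi A d) ≤ Real.log (1 - d / A) := by
    unfold hyPhi
    rcases eq_or_lt_of_le hd with h | h
    · have h1 : A - (d + 1) = 0 := by linarith
      have h2 : A - d = 1 := by linarith
      rw [h1, h2]; linarith
    · have hw : 0 < 1 - (d + 1) / A := by
        rw [sub_pos, div_lt_one hA]; linarith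
      have h3 := Real.log_le_sub_one_of_pos (div_pos hz hw)
      rw [Real.log_div hz.ne' hw.ne'] at h3
      have h4 : (A - (d + 1)) * ((1 - d / A) / (1 - (d + 1) / A) - 1) = 1 := by
        have : A - (d + 1) ≠ 0 := by linarith
        have h5 : 1 - (d + 1) / A = (A - (d + 1)) / A := by field_simp
        have h6 : 1 - d / A = (A - d) / A := by field_simp
        rw [h5, h6]; field_simp; ring
      have h5 := mul_le_mul_of_nonneg_left h3 (by linarith : 0 ≤ A - (d + 1))
      rw [h4] at h5
      nlinarith
  calc _ ≤ Real.exp (Real.log (1 - d / A)) * A := by gcongr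
    _ = A - d := by rw [Real.exp_log hz]; field_simp

lemma hyPhi_nonneg {A y : ℝ} (hA : 0 < A) (hy : y ≤ A) : 0 ≤ hyPhi A y := by
  unfold hyPhi
  rcases eq_or_lt_of_le hy with h | h
  · have h1 : A - y = 0 := by linarith
    rw [h1]; linarith
  · have hz : 0 < 1 - y / A := by
      rw [sub_pos, div_lt_one hA]; linarith
    have h1 := Real.one_sub_inv_le_log_of_pos hz
    have h2 := mul_le_mul_of_nonneg_left h1 (by linarith : 0 ≤ A - y)
    have h3 : (A - y) * (1 - (1 - y / A)⁻¹) = - y := by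
      have : A - y ≠ 0 := by linarith
      have h6 : 1 - y / A = (A - y) / A := by field_simp
      rw [h6]; field_simp; ring
    linarith

lemma hyPhi_le {A y : ℝ} (hA : 0 < A) (hy : y ≤ A) : hyPhi A y ≤ y ^ 2 / A := by
  unfold hyPhi
  rcases eq_or_lt_of_le hy with h | h
  · have h1 : A - y = 0 := by linarith
    rw [h1, ← h]
    rw [← h] at hA
    have : y ^ 2 / y = y := by field_simp
    rw [this]; linarith
  · have hz : 0 < 1 - y / A := by
      rw [sub_pos, div_lt_one hA]; linarith
    have h1 := Real.log_le_sub_one_of_pos hz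
    have h2 := mul_le_mul_of_nonneg_left h1 (by linarith : 0 ≤ A - y)
    have h3 : (A - y) * (1 - y / A - 1) = - y + y ^ 2 / A := by
      field_simp; ring
    linarith

noncomputable def hyPsi (A B C G y : ℝ) : ℝ :=
  hyPhi A y + hyPhi B y + (y + 1) ^ 2 / 2 * (1 / G + 1 / C)

lemma hyPsi_nonneg {A B C G y : ℝ} (hA : 0 < A) (hB : 0 < B) (hC : 0 < C) (hG : 0 < G)
    (h1 : y ≤ A) (h2 : y ≤ B) : 0 ≤ hyPsi A B C G y := by
  have := hyPhi_nonneg hA h1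
  have := hyPhi_nonneg hB h2
  unfold hyPsi
  positivity

section
variable {p : ℕ → ℝ} {M : ℕ} {A B C G : ℝ}

lemma hy_step (hA : 0 < A) (hB : 0 < B) (hC : 0 < C) (hG : 0 < G)
    (hp : ∀ j, 0 ≤ p j) (hM : A + G = M) (hABCG : A * B = G * C)
    (hrec : ∀ j : ℕ, j < M → p (j + 1) * (((j:ℝ) + 1) * (C - G + j + 1))
      = p j * ((B + G - j) * (A + G - j)))
    (u : ℕ) (hu : u < M) (hu1 : G - 1 ≤ u) (hu2 : (u:ℝ) + 1 ≤ B + G) :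
    p u ≤ Real.exp (hyPsi A B C G ((u + 1 : ℕ) - G) - hyPsi A B C G (u - G)) * p (u + 1) := by
  have huM : (u:ℝ) + 1 ≤ M := by exact_mod_cast hu
  obtain ⟨d, hd⟩ : ∃ d : ℝ, d = u - G := ⟨_, rfl⟩
  have hud : (u:ℝ) = G + d := by linarith
  have hr := hrec u hu
  have e1 : ((u + 1 : ℕ) : ℝ) - G = d + 1 := by push_cast; linarith
  rw [e1, ← hd]
  have sA := hyPhi_step hA (d := d) (by linarith)
  have sB := hyPhi_step hB (d := d) (by linarith)
  have sG : G + d + 1 ≤ G * Real.exp ((d + 1) / G) := by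
    have := Real.add_one_le_exp ((d + 1) / G)
    have h2 := mul_le_mul_of_nonneg_left this hG.le
    have : G * ((d + 1) / G + 1) = G + d + 1 := by field_simp; ring
    linarith
  have sC : C + d + 1 ≤ C * Real.exp ((d + 1) / C) := by
    have := Real.add_one_le_exp ((d + 1) / C)
    have h2 := mul_le_mul_of_nonneg_left this hC.le
    have : C * ((d + 1) / C + 1) = C + d + 1 := by field_simp; ring
    linarith
  have r1 : p u * ((B - d) * (A - d)) = p (u + 1) * ((G + d + 1) * (C + d + 1)) := by
    rw [hud] at hr
    have : p (u + 1) * ((G + d + 1) * (C + d + 1)) = p (u + 1) * ((G + d + 1) * (C - G + (G + d) + 1)) := by ring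
    rw [this, hr]; ring
  set eA := hyPhi A (d + 1) - hyPhi A d with heA
  set eB := hyPhi B (d + 1) - hyPhi B d with heB
  have r2 : p u * ((Real.exp (-eB) * B) * (Real.exp (-eA) * A))
      ≤ p (u + 1) * ((G * Real.exp ((d + 1) / G)) * (C * Real.exp ((d + 1) / C))) := by
    calc _ ≤ p u * ((B - d) * (A - d)) := by
          apply mul_le_mul_of_nonneg_left _ (hp u)
          apply mul_le_mul sB sA (by positivity) (by linarith)
      _ = _ := r1
      _ ≤ _ := by
          apply mul_le_mul_of_nonneg_left _ (hp _)
          apply mul_le_mul sG sC (by linarith) (by positivity)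
  have r3 : p u * (Real.exp (-eB) * Real.exp (-eA)) ≤
      p (u + 1) * (Real.exp ((d + 1) / G) * Real.exp ((d + 1) / C)) := by
    have hGC : 0 < G * C := by positivity
    refine le_of_mul_le_mul_right ?_ hGC
    calc _ = p u * ((Real.exp (-eB) * B) * (Real.exp (-eA) * A)) := by rw [← hABCG]; ring
      _ ≤ _ := r2
      _ = _ := by ring
  rw [← Real.exp_add, ← Real.exp_add] at r3
  have r4 : p u ≤ p (u + 1) * (Real.exp ((d + 1) / G + (d + 1) / C) * Real.exp (eB + eA)) := by
    have h := mul_le_mul_of_nonneg_right r3 (Real.exp_pos (eB + eA)).le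
    have h2 : Real.exp (-eB + -eA) * Real.exp (eB + eA) = 1 := by
      rw [← Real.exp_add, ← Real.exp_zero]; congr 1; ring
    calc p u = p u * Real.exp (-eB + -eA) * Real.exp (eB + eA) := by rw [mul_assoc, h2, mul_one]
      _ ≤ _ := h
      _ = _ := by ring
  refine r4.trans ?_
  rw [← Real.exp_add, mul_comm]
  apply mul_le_mul_of_nonneg_right _ (hp _)
  apply Real.exp_le_exp.mpr
  unfold hyPsi
  have hGC : 0 ≤ 1 / G + 1 / C := by positivity
  have e5 : (d + 1) / G + (d + 1) / C = (d + 1) * (1 / G + 1 / C) := by ring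
  rw [e5]
  nlinarith

lemma hy_decay (hA : 0 < A) (hB : 0 < B) (hC : 0 < C) (hG : 0 < G)
    (hp : ∀ j, 0 ≤ p j) (hM : A + G = M) (hABCG : A * B = G * C)
    (hrec : ∀ j : ℕ, j < M → p (j + 1) * (((j:ℝ) + 1) * (C - G + j + 1))
      = p j * ((B + G - j) * (A + G - j)))
    (i : ℕ) (hi : G - 1 ≤ i) (n : ℕ) (hn : i + n ≤ M) (hn2 : ((i + n : ℕ):ℝ) ≤ B + G) :
    p i ≤ Real.exp (hyPsi A B C G ((i + n : ℕ) - G) - hyPsi A B C G (i - G)) * p (i + n) := by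
  induction n with
  | zero => simp
  | succ n ih =>
    have h1 := ih (by omega) (by push_cast at hn2 ⊢; linarith)
    have h2 := hy_step hA hB hC hG hp hM hABCG hrec (i + n) (by omega)
      (by push_cast; have : (0:ℝ) ≤ n := by positivity
          linarith) (by push_cast at hn2 ⊢; linarith)
    calc p i ≤ _ := h1
      _ ≤ _ := mul_le_mul_of_nonneg_left h2 (Real.exp_pos _).le
      _ = _ := by
        rw [← mul_assoc, ← Real.exp_add]
        congr 2
        ring_nf

lemma hy_up (hA : 0 < A) (hB : 0 < B) (hC : 0 < C) (hG : 0 < G)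
    (hp : ∀ j, 0 ≤ p j) (hM : A + G = M) (hABCG : A * B = G * C)
    (hrec : ∀ j : ℕ, j < M → p (j + 1) * (((j:ℝ) + 1) * (C - G + j + 1))
      = p j * ((B + G - j) * (A + G - j)))
    (i n : ℕ) (hn : ((i + n : ℕ):ℝ) ≤ G) : p i ≤ p (i + n) := by
  induction n with
  | zero => simp
  | succ n ih =>
    have hn' : ((i + n : ℕ) : ℝ) + 1 ≤ G := by push_cast at hn ⊢; linarith
    refine (ih (by linarith)).trans ?_
    rw [← add_assoc]
    generalize i + n = u at *
    have huM : u < M := by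
      have : (u:ℝ) < M := by linarith
      exact_mod_cast this
    have hr := hrec u huM
    have hu0 : (0:ℝ) ≤ u := by positivity
    have hpos : 0 < (B + G - u) * (A + G - u) := by
      apply mul_pos <;> linarith
    by_contra hlt
    push Not at hlt
    have h1 : ((u:ℝ) + 1) * (C - G + u + 1) ≤ (B + G - u) * (A + G - u) := by
      nlinarith
    rcases le_or_gt (((u:ℝ) + 1) * (C - G + u + 1)) 0 with h | h
    · have h2 : p (u + 1) * (((u:ℝ) + 1) * (C - G + u + 1)) ≤ 0 :=
        mul_nonpos_of_nonneg_of_nonpos (hp _) h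
      have h3 : 0 < p u := lt_of_le_of_lt (hp _) hlt
      have := mul_pos h3 hpos
      linarith
    · have h4 := mul_lt_mul_of_pos_right hlt hpos
      have h5 := mul_le_mul_of_nonneg_left h1 (hp (u + 1))
      linarith

lemma hy_down (hA : 0 < A) (hB : 0 < B) (hC : 0 < C) (hG : 0 < G)
    (hp : ∀ j, 0 ≤ p j) (hM : A + G = M) (hABCG : A * B = G * C)
    (hrec : ∀ j : ℕ, j < M → p (j + 1) * (((j:ℝ) + 1) * (C - G + j + 1))
      = p j * ((B + G - j) * (A + G - j)))
    (i n : ℕ) (hi : G ≤ i) (hn : i + n ≤ M) : p (i + n) ≤ p i := by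
  induction n with
  | zero => simp
  | succ n ih =>
    refine le_trans ?_ (ih (by omega))
    have hu : G ≤ ((i + n : ℕ) : ℝ) := by push_cast; have : (0:ℝ) ≤ n := by positivity
                                          linarith
    have huM : i + n < M := by omega
    rw [← add_assoc]
    generalize i + n = u at *
    have hr := hrec u huM
    have huM' : (u:ℝ) + 1 ≤ M := by exact_mod_cast huM
    have h0 : 0 < ((u:ℝ) + 1) * (C - G + u + 1) := by
      apply mul_pos <;> linarith
    have h1 : (B + G - u) * (A + G - u) ≤ ((u:ℝ) + 1) * (C - G + u + 1) := by
      nlinarith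
    refine le_of_mul_le_mul_right ?_ h0
    rw [hr]
    exact mul_le_mul_of_nonneg_left h1 (hp u)

lemma hy_compare (hA : 0 < A) (hB : 0 < B) (hC : 0 < C) (hG : 0 < G)
    (hp : ∀ j, 0 ≤ p j) (hM : A + G = M) (hABCG : A * B = G * C)
    (hrec : ∀ j : ℕ, j < M → p (j + 1) * (((j:ℝ) + 1) * (C - G + j + 1))
      = p j * ((B + G - j) * (A + G - j)))
    (i j : ℕ) (hi : i ≤ M) (hj : j ≤ M) (hGj : G ≤ j) (hjK : (j:ℝ) ≤ B + G) :
    p i ≤ Real.exp (hyPsi A B C G (j - G)) * p j := by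
  have hjM : (j:ℝ) ≤ M := by exact_mod_cast hj
  have hpsi : 0 ≤ hyPsi A B C G (j - G) :=
    hyPsi_nonneg hA hB hC hG (by linarith) (by linarith)
  have main : ∀ i : ℕ, i ≤ j → G - 1 ≤ i → p i ≤ Real.exp (hyPsi A B C G (j - G)) * p j := by
    intro i hij hGi
    obtain ⟨n, rfl⟩ := Nat.exists_eq_add_of_le hij
    have h := hy_decay hA hB hC hG hp hM hABCG hrec i hGi n hj hjK
    refine h.trans (mul_le_mul_of_nonneg_right (Real.exp_le_exp.mpr ?_) (hp _))
    have hij' : (i:ℝ) ≤ ((i + n : ℕ) : ℝ) := by exact_mod_cast hij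
    have := hyPsi_nonneg (y := i - G) hA hB hC hG (by linarith) (by linarith)
    linarith
  rcases le_total j i with h | h
  · obtain ⟨n, rfl⟩ := Nat.exists_eq_add_of_le h
    have h1 := hy_down hA hB hC hG hp hM hABCG hrec j n hGj hi
    have h2 := Real.one_le_exp hpsi
    have := hp j
    nlinarith
  · rcases le_or_gt (G - 1) i with h' | h'
    · exact main i h h'
    · have hf := Nat.floor_le hG.le
      have hf2 := Nat.lt_floor_add_one G
      have hif : i ≤ ⌊G⌋₊ := Nat.le_floor (by linarith)
      obtain ⟨n, hn⟩ := Nat.exists_eq_add_of_le hif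
      have h1 := hy_up hA hB hC hG hp hM hABCG hrec i n (by rw [← hn]; exact hf)
      rw [← hn] at h1
      refine h1.trans (main _ ?_ (by linarith))
      have : ((⌊G⌋₊:ℕ):ℝ) ≤ j := by linarith
      exact_mod_cast this

lemma hy_var 
    (hM : A + G = M) (hABCG : A * B = G * C)
    (hrec : ∀ j : ℕ, j < M → p (j + 1) * (((j:ℝ) + 1) * (C - G + j + 1))
      = p j * ((B + G - j) * (A + G - j)))
    (hsum : ∑ j ∈ Finset.range (M + 1), p j = 1) :
    (A + B + C + G - 1) * ∑ j ∈ Finset.range (M + 1), p j * ((j:ℝ) - G) ^ 2 = G * C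
    ∨ A + B + C + G = 0 := by
  have tele : ∀ w : ℕ → ℝ, ∑ j ∈ Finset.range (M + 1), w j * (p j * ((j:ℝ) * (C - G + j)))
      = ∑ j ∈ Finset.range (M + 1), w (j + 1) * (p j * ((B + G - j) * (A + G - j))) := by
    intro w
    rw [Finset.sum_range_succ', Finset.sum_range_succ]
    have h0 : A + G - (M:ℝ) = 0 := by linarith
    rw [h0]
    simp only [Nat.cast_zero, zero_mul, mul_zero, add_zero]
    apply Finset.sum_congr rfl
    intro j hj
    rw [← hrec j (Finset.mem_range.mp hj)]
    push_cast
    ring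
  by_cases hN : A + B + C + G = 0
  · right; exact hN
  left
  have t1 := tele (fun _ => 1)
  have t2 := tele (fun j => (j:ℝ))
  set S1 := ∑ j ∈ Finset.range (M + 1), p j * ((j:ℝ) - G) with hS1
  have m1 : (A + B + C + G) * S1 = 0 := by
    rw [← sub_eq_zero, ← Finset.sum_sub_distrib] at t1
    rw [← t1, hS1, Finset.mul_sum]
    apply Finset.sum_congr rfl
    intro j _
    linear_combination (p j) * hABCG
  have m1' : S1 = 0 := by
    rcases mul_eq_zero.mp m1 with h | h
    · exact absurd h hN
    · exact h
  rw [← sub_eq_zero, ← Finset.sum_sub_distrib] at t2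
  have m2 : (A + B + C + G - 1) * ∑ j ∈ Finset.range (M + 1), p j * ((j:ℝ) - G) ^ 2
      + (2 * G * C + G ^ 2 - A * B + (G + 1) * (A + B)) * S1
      + (-(G * C)) * ∑ j ∈ Finset.range (M + 1), p j = 0 := by
    rw [← t2, hS1, Finset.mul_sum, Finset.mul_sum, Finset.mul_sum, ← Finset.sum_add_distrib,
      ← Finset.sum_add_distrib]
    apply Finset.sum_congr rfl
    intro j _
    push_cast
    linear_combination (p j) * (G + 1) * hABCG
  rw [m1', hsum] at m2
  linarith

lemma hy_point (hA : 0 < A) (hB : 0 < B) (hC : 0 < C) (hG : 0 < G)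
    (hp : ∀ j, 0 ≤ p j) (hM : A + G = M) (hABCG : A * B = G * C)
    (hrec : ∀ j : ℕ, j < M → p (j + 1) * (((j:ℝ) + 1) * (C - G + j + 1))
      = p j * ((B + G - j) * (A + G - j)))
    (hsum : ∑ j ∈ Finset.range (M + 1), p j = 1) (s : ℝ) (hs : 0 < s)
    (hvar : G * C ≤ s ^ 2 * (A + B + C + G - 1)) (hN : 1 < A + B + C + G)
    (j : ℕ) (hj : j ≤ M) (hGj : G ≤ j) (hjK : (j:ℝ) ≤ B + G) :
    3 / 4 ≤ (4 * s + 1) * (Real.exp (hyPsi A B C G (j - G)) * p j) := by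
  have hv : ∑ j ∈ Finset.range (M + 1), p j * ((j:ℝ) - G) ^ 2 ≤ s ^ 2 := by
    rcases hy_var hM hABCG hrec hsum with h | h
    · rw [← h, mul_comm (s ^ 2)] at hvar
      exact le_of_mul_le_mul_left hvar (by linarith)
    · linarith
  set W := (Finset.range (M + 1)).filter (fun i : ℕ => |(i:ℝ) - G| < 2 * s) with hW
  have hmass : 3 / 4 ≤ ∑ i ∈ W, p i := by
    rw [hW, Finset.sum_filter]
    have : ∑ i ∈ Finset.range (M + 1), (p i - p i * ((i:ℝ) - G) ^ 2 / (4 * s ^ 2))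
       ≤ ∑ i ∈ Finset.range (M + 1), if |(i:ℝ) - G| < 2 * s then p i else 0 := by
      apply Finset.sum_le_sum
      intro i _
      have := hp i
      split_ifs with h
      · have : 0 ≤ p i * ((i:ℝ) - G) ^ 2 / (4 * s ^ 2) := by positivity
        linarith
      · push Not at h
        have h2 : 4 * s ^ 2 ≤ ((i:ℝ) - G) ^ 2 := by
          rw [← sq_abs ((i:ℝ) - G)]; nlinarith
        have : p i ≤ p i * ((i:ℝ) - G) ^ 2 / (4 * s ^ 2) := by
          rw [le_div_iff₀ (by positivity)]
          exact mul_le_mul_of_nonneg_left h2 (hp i)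
        linarith
    rw [Finset.sum_sub_distrib, hsum, ← Finset.sum_div] at this
    have h3 : (∑ j ∈ Finset.range (M + 1), p j * ((j:ℝ) - G) ^ 2) / (4 * s ^ 2) ≤ 1 / 4 := by
      rw [div_le_iff₀ (by positivity)]; linarith
    linarith
  have hcard : (W.card : ℝ) ≤ 4 * s + 1 := by
    have h1 : W.card ≤ (Finset.Icc ⌈G - 2 * s⌉ ⌊G + 2 * s⌋).card := by
      apply Finset.card_le_card_of_injOn (fun i : ℕ => (i:ℤ))
      · intro i hi
        have hi' : i ∈ W := hi
        rw [hW, Finset.mem_filter, abs_lt] at hi'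
        rw [Finset.mem_coe, Finset.mem_Icc, Int.ceil_le, Int.le_floor]
        push_cast
        constructor <;> linarith [hi'.2.1, hi'.2.2]
      · intro a _ b _ h; exact Int.ofNat_injective h
    rw [Int.card_Icc] at h1
    have h2 : (W.card : ℤ) ≤ max (⌊G + 2 * s⌋ + 1 - ⌈G - 2 * s⌉) 0 := by
      rw [← Int.toNat_eq_max]; exact_mod_cast h1
    have h3 : (W.card : ℝ) ≤ max ((⌊G + 2 * s⌋:ℝ) + 1 - ⌈G - 2 * s⌉) 0 := by exact_mod_cast h2
    refine h3.trans (max_le ?_ (by positivity))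
    have := Int.floor_le (G + 2 * s)
    have := Int.le_ceil (G - 2 * s)
    linarith
  have hb : ∑ i ∈ W, p i ≤ W.card * (Real.exp (hyPsi A B C G (j - G)) * p j) := by
    rw [← nsmul_eq_mul]
    apply Finset.sum_le_card_nsmul
    intro i hi
    rw [hW, Finset.mem_filter, Finset.mem_range] at hi
    exact hy_compare hA hB hC hG hp hM hABCG hrec i j (by omega) hj hGj hjK
  have : 0 ≤ Real.exp (hyPsi A B C G (j - G)) * p j := mul_nonneg (Real.exp_pos _).le (hp j)
  nlinarith

end

lemma hyPsi_le {A B C G y s : ℝ} (hA : 0 < A) (hG : 0 < G) (hs : 0 < s)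
    (hs2 : s ^ 2 * (A + G) = A * G) (hBG : 3 * G ≤ B) (hCA : 3 * A ≤ C)
    (hy0 : 0 ≤ y) (h1 : y ≤ A) (h2 : y ≤ B) :
    hyPsi A B C G y ≤ 7 / 6 * ((y + 1) / s) ^ 2 := by
  have hB : 0 < B := by linarith
  have hC : 0 < C := by linarith
  have a1 := hyPhi_le hA h1
  have a2 := hyPhi_le hB h2
  have hinv : 1 / s ^ 2 = 1 / A + 1 / G := by
    field_simp
    linarith
  have hBi : 1 / B ≤ 1 / (3 * G) := one_div_le_one_div_of_le (by positivity) hBG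
  have hCi : 1 / C ≤ 1 / (3 * A) := one_div_le_one_div_of_le (by positivity) hCA
  have e1 : 1 / (3 * G) = 1 / 3 * (1 / G) := by field_simp
  have e2 : 1 / (3 * A) = 1 / 3 * (1 / A) := by field_simp
  rw [e1] at hBi
  rw [e2] at hCi
  have hyy : y ^ 2 ≤ (y + 1) ^ 2 := by nlinarith
  have iA : 0 < 1 / A := by positivity
  have iG : 0 < 1 / G := by positivity
  have iB : 0 < 1 / B := by positivity
  have b1 : y ^ 2 / A ≤ (y + 1) ^ 2 * (1 / A) := by
    rw [div_eq_mul_one_div]; gcongr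
  have b2 : y ^ 2 / B ≤ (y + 1) ^ 2 * (1 / 3 * (1 / G)) := by
    rw [div_eq_mul_one_div]; gcongr
  have b3 : (y + 1) ^ 2 / 2 * (1 / G + 1 / C) ≤ (y + 1) ^ 2 / 2 * (1 / G + 1 / 3 * (1 / A)) := by
    gcongr
  have e3 : 7 / 6 * ((y + 1) / s) ^ 2 = 7 / 6 * ((y + 1) ^ 2 * (1 / A + 1 / G)) := by
    rw [← hinv]; ring
  rw [e3]
  unfold hyPsi
  have : 0 ≤ (y + 1) ^ 2 * (1 / G) := by positivity
  nlinarith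

set_option maxHeartbeats 1000000 in
lemma hy_final {p : ℕ → ℝ} {M : ℕ} {A B C G : ℝ}
    (hA : 0 < A) (hG : 0 < G)
    (hp : ∀ j, 0 ≤ p j) (hM : A + G = M) (hABCG : A * B = G * C)
    (hrec : ∀ j : ℕ, j < M → p (j + 1) * (((j:ℝ) + 1) * (C - G + j + 1))
      = p j * ((B + G - j) * (A + G - j)))
    (hsum : ∑ j ∈ Finset.range (M + 1), p j = 1) (s : ℝ) (hs : 0 < s) (hs' : 2 ≤ s ^ 2)
    (hvar : G * C ≤ s ^ 2 * (A + B + C + G - 1)) (hN : 1 < A + B + C + G)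
    (hs2 : s ^ 2 * (A + G) = A * G) (hBG : 3 * G ≤ B) (hCA : 3 * A ≤ C)
    (r : ℝ) (hr1 : G ≤ r) (hr2 : r ≤ M) (hr3 : r + 1 + s ≤ B + G) :
    Real.sqrt (Real.pi / 320) * Real.exp (-24) * Real.exp (-6 * ((r - G) / s) ^ 2)
      ≤ ∑ j ∈ Finset.range (M + 1), if r ≤ (j:ℝ) then p j else 0 := by
  have hB : 0 < B := by linarith
  have hC : 0 < C := by linarith
  have hs14 : 4 / 3 ≤ s := by nlinarith
  obtain ⟨τ, hτ⟩ : ∃ τ, τ = (r - G) / s := ⟨_, rfl⟩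
  have hτ0 : 0 ≤ τ := by rw [hτ]; apply div_nonneg <;> linarith
  have hτs : τ * s = r - G := by rw [hτ]; field_simp
  rw [← hτ]
  have hsqrt : Real.sqrt (Real.pi / 320) ≤ 1 / 10 := by
    rw [Real.sqrt_le_left (by norm_num)]
    have := Real.pi_lt_d2
    linarith
  have hr0 : 0 ≤ r := by linarith
  set E := 7 / 6 * (τ + 5 / 2) ^ 2 with hE
  have point : ∀ j : ℕ, j ≤ M → r ≤ j → (j:ℝ) ≤ r + 1 + s →
      3 / 4 * Real.exp (-E) / (4 * s + 1) ≤ p j := by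
    intro j hj hrj hjs
    have hjM : (j:ℝ) ≤ M := by exact_mod_cast hj
    have h1 := hy_point hA hB hC hG hp hM hABCG hrec hsum s hs hvar hN j hj (by linarith)
      (by linarith)
    have h2 := hyPsi_le (y := j - G) hA hG hs hs2 hBG hCA (by linarith) (by linarith)
      (by linarith)
    have h3 : ((j:ℝ) - G + 1) / s ≤ τ + 5 / 2 := by
      rw [div_le_iff₀ hs]; linarith
    have h30 : 0 ≤ ((j:ℝ) - G + 1) / s := by
      apply div_nonneg <;> linarith
    have h4 : hyPsi A B C G (j - G) ≤ E := by
      refine h2.trans ?_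
      rw [hE]; gcongr
    have h5 : 3 / 4 ≤ (4 * s + 1) * (Real.exp E * p j) := by
      refine h1.trans ?_
      have := hp j
      gcongr
    rw [div_le_iff₀ (by positivity)]
    calc 3 / 4 * Real.exp (-E) ≤ (4 * s + 1) * (Real.exp E * p j) * Real.exp (-E) := by gcongr
      _ = (Real.exp E * Real.exp (-E)) * (p j * (4 * s + 1)) := by ring
      _ = _ := by rw [← Real.exp_add]; simp
  set L := ⌈r⌉₊ with hL
  have hL1 : r ≤ L := Nat.le_ceil r
  have hL2 : (L:ℝ) < r + 1 := Nat.ceil_lt_add_one hr0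
  have hLM : L ≤ M := Nat.ceil_le.mpr hr2
  have hf1 : (⌊s⌋₊:ℝ) ≤ s := Nat.floor_le hs.le
  have hf2 : s < ⌊s⌋₊ + 1 := Nat.lt_floor_add_one s
  have nonneg : ∀ j ∈ Finset.range (M + 1), 0 ≤ if r ≤ (j:ℝ) then p j else 0 := by
    intro j _
    split_ifs
    · exact hp j
    · exact le_rfl
  by_cases hcase : L + ⌊s⌋₊ ≤ M
  · have hsub : Finset.Icc L (L + ⌊s⌋₊) ⊆ Finset.range (M + 1) := by
      intro j hj
      rw [Finset.mem_Icc] at hj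
      rw [Finset.mem_range]; omega
    refine le_trans ?_ (Finset.sum_le_sum_of_subset_of_nonneg hsub (fun j hj _ => nonneg j hj))
    have hge : (Finset.Icc L (L + ⌊s⌋₊)).card • (3 / 4 * Real.exp (-E) / (4 * s + 1)) ≤
        ∑ j ∈ Finset.Icc L (L + ⌊s⌋₊), if r ≤ (j:ℝ) then p j else 0 := by
      apply Finset.card_nsmul_le_sum
      intro j hj
      rw [Finset.mem_Icc] at hj
      have hj1 : (L:ℝ) ≤ j := by exact_mod_cast hj.1
      have hj2 : (j:ℝ) ≤ L + ⌊s⌋₊ := by exact_mod_cast hj.2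
      rw [if_pos (by linarith)]
      exact point j (by omega) (by linarith) (by linarith)
    refine le_trans ?_ hge
    have hc : (Finset.Icc L (L + ⌊s⌋₊)).card = ⌊s⌋₊ + 1 := by
      rw [Nat.card_Icc]; omega
    rw [hc, nsmul_eq_mul]
    push_cast
    calc Real.sqrt (Real.pi / 320) * Real.exp (-24) * Real.exp (-6 * τ ^ 2)
        = Real.sqrt (Real.pi / 320) * Real.exp (-24 + -6 * τ ^ 2) := by
          rw [mul_assoc, ← Real.exp_add]
      _ ≤ 1 / 10 * Real.exp (-E) := by
          refine mul_le_mul hsqrt (Real.exp_le_exp.mpr ?_) (Real.exp_pos _).le (by norm_num)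
          rw [hE]
          have hq := sq_nonneg (τ - 1)
          ring_nf at hq ⊢
          linarith
      _ ≤ s * (3 / 4 * Real.exp (-E) / (4 * s + 1)) := by
          have e : s * (3 / 4 * Real.exp (-E) / (4 * s + 1))
            = (s * (3 / 4) / (4 * s + 1)) * Real.exp (-E) := by ring
          rw [e]
          refine mul_le_mul_of_nonneg_right ?_ (Real.exp_pos _).le
          rw [le_div_iff₀ (by positivity)]
          linarith
      _ ≤ _ := by gcongr
  · have hML : (M:ℝ) < L + ⌊s⌋₊ := by exact_mod_cast (not_le.mp hcase)
    refine le_trans ?_ (Finset.single_le_sum nonneg (Finset.mem_range.mpr (by omega : L < M + 1)))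
    rw [if_pos hL1]
    refine le_trans ?_ (point L hLM hL1 (by linarith))
    have hAs : s ^ 2 ≤ A := by
      refine le_of_mul_le_mul_right ?_ hG
      have h1 : 0 ≤ s ^ 2 * A := by positivity
      rw [mul_add] at hs2
      linarith
    have hst : s ≤ τ + 2 := by
      by_contra hcon
      push Not at hcon
      have h1 := mul_lt_mul_of_pos_right hcon hs
      have h2 : s ^ 2 < τ * s + 1 + s := by linarith
      rw [add_mul] at h1
      have h3 : s * s = s ^ 2 := by ring
      linarith
    calc Real.sqrt (Real.pi / 320) * Real.exp (-24) * Real.exp (-6 * τ ^ 2)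
        = Real.sqrt (Real.pi / 320) * Real.exp (-24 + -6 * τ ^ 2) := by
          rw [mul_assoc, ← Real.exp_add]
      _ ≤ 1 / 10 * Real.exp (-E + -(τ + 1)) := by
          refine mul_le_mul hsqrt (Real.exp_le_exp.mpr ?_) (Real.exp_pos _).le (by norm_num)
          rw [hE]
          have hq := sq_nonneg (τ - 1)
          ring_nf at hq ⊢
          linarith
      _ = (1 / 10 * Real.exp (-(τ + 1))) * Real.exp (-E) := by
          rw [Real.exp_add]; ring
      _ ≤ (3 / 4 / (4 * s + 1)) * Real.exp (-E) := by
          refine mul_le_mul_of_nonneg_right ?_ (Real.exp_pos _).le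
          rw [le_div_iff₀ (by positivity)]
          have h1 := Real.add_one_le_exp (τ + 1)
          have h2 : 4 * s + 1 ≤ 15 / 2 * Real.exp (τ + 1) := by linarith
          calc 1 / 10 * Real.exp (-(τ + 1)) * (4 * s + 1)
              ≤ 1 / 10 * Real.exp (-(τ + 1)) * (15 / 2 * Real.exp (τ + 1)) := by gcongr
            _ = 3 / 4 * (Real.exp (-(τ + 1)) * Real.exp (τ + 1)) := by ring
            _ = 3 / 4 := by rw [← Real.exp_add]; simp
      _ = _ := by ring

lemma choose_succ_real (n k : ℕ) :
    (n.choose (k + 1) : ℝ) * ((k:ℝ) + 1) = n.choose k * ((n:ℝ) - k) := by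
  have h := Nat.choose_succ_right_eq n k
  rcases le_or_gt k n with hk | hk
  · rw [← Nat.cast_sub hk]; exact_mod_cast h
  · rw [Nat.choose_eq_zero_of_lt hk, Nat.choose_eq_zero_of_lt (by omega : n < k + 1)]; simp

set_option maxHeartbeats 1000000 in
/-- Hypergeometric lower tail bound: for a real `0 ≤ ℓ ≤ M` with `ℓ < K` and `M - ℓ < N - K`,
setting `a = ℓ/M`, `b = K/N`, `x = M/N`, if `a ≤ (8/5)b`, `1-a ≤ 2(1-b)`, `x ≤ 1/4` and
`M·a·(1-a) ≥ 4`, then `Pr[X ≥ ℓ] ≥ √(π/320)·e^{-24}·e^{-6(a-b)²M/(b(1-b))}`. -/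
theorem hypergeometric_tail_lower_bound (N K M : ℕ) (ℓ : ℝ)
    (hℓ0 : 0 ≤ ℓ) (hℓM : ℓ ≤ M) (hℓK : ℓ < K) (hMN : (M:ℝ) - ℓ < (N:ℝ) - K)
    (hK0 : 0 < K) (hKN : K < N)
    (hab1 : ℓ/M ≤ (8/5) * ((K:ℝ)/N))
    (hab2 : 1 - ℓ/M ≤ 2 * (1 - (K:ℝ)/N))
    (hx : (M:ℝ)/N ≤ 1/4)
    (hMa : 4 ≤ (M:ℝ) * (ℓ/M) * (1 - ℓ/M)) :
    Real.sqrt (Real.pi / 320) * Real.exp (-24)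
      * Real.exp (-6 * (ℓ/M - (K:ℝ)/N)^2 * M / (((K:ℝ)/N) * (1 - (K:ℝ)/N)))
    ≤ ∑ j ∈ Finset.range (M + 1),
        (if ℓ ≤ (j:ℝ) then (K.choose j * (N - K).choose (M - j) : ℝ) / (N.choose M)
         else 0) := by
  have hM0 : 0 < M := by
    rcases Nat.eq_zero_or_pos M with h | h
    · rw [h] at hMa; norm_num at hMa
    · exact h
  have hN0 : 0 < N := by omega
  have hm : (1:ℝ) ≤ M := by exact_mod_cast hM0
  have hn : (0:ℝ) < N := by exact_mod_cast hN0
  have hk : (0:ℝ) < K := by exact_mod_cast hK0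
  have hkn : (K:ℝ) < N := by exact_mod_cast hKN
  have hmn : (M:ℝ) ≤ N / 4 := by
    rw [div_le_iff₀ hn] at hx; linarith
  have hMN' : M ≤ N := by
    have : (M:ℝ) ≤ N := by linarith
    exact_mod_cast this
  have hm0 : (0:ℝ) < M := by linarith
  obtain ⟨a, ha⟩ : ∃ a, a = ℓ / M := ⟨_, rfl⟩
  obtain ⟨b, hb⟩ : ∃ b, b = (K:ℝ) / N := ⟨_, rfl⟩
  have hℓa : ℓ = a * M := by rw [ha]; field_simp
  have hKb : (K:ℝ) = b * N := by rw [hb]; field_simp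
  rw [← ha] at hab1 hab2 hMa
  rw [← hb] at hab1 hab2
  rw [← ha, ← hb]
  have hb0 : 0 < b := by rw [hb]; positivity
  have hb1 : b < 1 := by rw [hb, div_lt_one hn]; exact hkn
  have ha0 : 0 ≤ a := by rw [ha]; positivity
  have ha1 : a ≤ 1 := by rw [ha, div_le_one hm0]; exact hℓM
  have hv2 : 2 ≤ (M:ℝ) * (b * (1 - b)) := by
    have : a * (1 - a) / 2 ≤ b * (1 - b) := by
      rcases le_total a b with h | h
      · nlinarith
      · nlinarith
    have h2 := mul_le_mul_of_nonneg_left this hm0.le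
    have h3 : (M:ℝ) * (a * (1 - a) / 2) = M * a * (1 - a) / 2 := by ring
    linarith
  set s := Real.sqrt ((M:ℝ) * (b * (1 - b))) with hsdef
  have hsq : s ^ 2 = (M:ℝ) * (b * (1 - b)) := Real.sq_sqrt (by linarith)
  have hs : 0 < s := Real.sqrt_pos.mpr (by linarith)
  set p : ℕ → ℝ := fun j => (K.choose j * (N - K).choose (M - j) : ℝ) / (N.choose M) with hpdef
  have hchoose : (0:ℝ) < N.choose M := by exact_mod_cast Nat.choose_pos hMN'
  have hp : ∀ j, 0 ≤ p j := by intro j; rw [hpdef]; positivity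
  have hsum : ∑ j ∈ Finset.range (M + 1), p j = 1 := by
    rw [hpdef, ← Finset.sum_div, div_eq_one_iff_eq hchoose.ne']
    have h := Nat.add_choose_eq K (N - K) M
    rw [Nat.add_sub_cancel' hKN.le, Finset.Nat.sum_antidiagonal_eq_sum_range_succ_mk] at h
    rw [h]
    push_cast
    rfl
  have hrec : ∀ j : ℕ, j < M →
      p (j + 1) * (((j:ℝ) + 1) * ((1 - b) * (N - M) - b * M + j + 1))
      = p j * ((b * (N - M) + b * M - j) * (M * (1 - b) + b * M - j)) := by
    intro j hj
    obtain ⟨i, rfl⟩ : ∃ i, M = j + 1 + i := Nat.exists_eq_add_of_le hj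
    have c1 := choose_succ_real K j
    have c2 := choose_succ_real (N - K) i
    rw [Nat.cast_sub hKN.le] at c2
    have e1 : j + 1 + i - (j + 1) = i := by omega
    have e2 : j + 1 + i - j = i + 1 := by omega
    simp only [hpdef, e1, e2]
    rw [div_mul_eq_mul_div, div_mul_eq_mul_div]
    congr 1
    have e3 : (1 - b) * ((N:ℝ) - ((j + 1 + i : ℕ):ℝ)) - b * ((j + 1 + i : ℕ):ℝ) + j + 1
        = N - K - i := by
      rw [hKb]; push_cast; ring
    have e4 : b * ((N:ℝ) - ((j + 1 + i : ℕ):ℝ)) + b * ((j + 1 + i : ℕ):ℝ) - j = K - j := by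
      rw [hKb]; ring
    have e5 : ((j + 1 + i : ℕ):ℝ) * (1 - b) + b * ((j + 1 + i : ℕ):ℝ) - j = i + 1 := by
      push_cast; ring
    rw [e3, e4, e5]
    calc _ = ((K.choose (j + 1) : ℝ) * ((j:ℝ) + 1)) * (((N - K).choose i : ℝ) * (N - K - i)) := by
          ring
      _ = _ := by rw [c1, ← c2]; ring
  have hG : 0 < b * (M:ℝ) := by positivity
  have hA : 0 < (M:ℝ) * (1 - b) := mul_pos hm0 (by linarith)
  have hGK : b * (M:ℝ) ≤ K / 4 := by
    rw [hKb]
    have := mul_le_mul_of_nonneg_left hmn hb0.le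
    linarith
  have hG2 : 2 ≤ b * (M:ℝ) := by
    have h1 : 0 ≤ (M:ℝ) * b * b := by positivity
    linarith
  have hℓG : ℓ ≤ 8 / 5 * (b * M) := by
    rw [hℓa]
    have := mul_le_mul_of_nonneg_right hab1 hm0.le
    linarith
  have hsG : s ^ 2 ≤ b * M := by
    rw [hsq]
    have h1 : 0 ≤ (M:ℝ) * b * b := by positivity
    linarith
  have hs1 : s ≤ 1 + b * M / 4 := by
    have h1 := sq_nonneg (s - 2)
    have h2 : (s - 2) ^ 2 = s ^ 2 - 4 * s + 4 := by ring
    linarith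
  have fin := hy_final (p := p) (M := M) (A := M * (1 - b)) (B := b * (N - M))
    (C := (1 - b) * (N - M)) (G := b * M) hA hG hp (by ring) (by ring) hrec hsum s hs
    (by rw [hsq]; exact hv2)
    (by
      rw [hsq]
      have : (M:ℝ) * (1 - b) + b * (N - M) + (1 - b) * (N - M) + b * M - 1 = N - 1 := by ring
      rw [this]
      have h2 : 0 ≤ (M:ℝ) * (b * (1 - b)) := by linarith
      have h3 := mul_le_mul_of_nonneg_left (by linarith : (N:ℝ) - M ≤ N - 1) h2
      linarith)
    (by
      have : (M:ℝ) * (1 - b) + b * (N - M) + (1 - b) * (N - M) + b * M = N := by ring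
      rw [this]; linarith)
    (by rw [hsq]; ring) (by rw [mul_sub, ← hKb]; linarith)
    (by
      have h3 := mul_le_mul_of_nonneg_left (by linarith : 3 * (M:ℝ) ≤ N - M)
        (by linarith : 0 ≤ 1 - b)
      linarith)
    (max ℓ (b * M)) (le_max_right _ _) (max_le hℓM (by linarith))
    (by
      have : max ℓ (b * M) ≤ 8 / 5 * (b * M) := max_le hℓG (by linarith)
      rw [mul_sub, ← hKb]; linarith)
  refine le_trans ?_ (fin.trans ?_)
  · gcongr
    have e : -6 * (a - b) ^ 2 * M / (b * (1 - b)) = -6 * (((a - b) * M) ^ 2 / s ^ 2) := by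
      rw [hsq]
      have : 1 - b ≠ 0 := by linarith
      field_simp
    rw [e, div_pow]
    have : (max ℓ (b * M) - b * M) ^ 2 ≤ ((a - b) * M) ^ 2 := by
      rcases le_total ℓ (b * M) with h | h
      · rw [max_eq_right h]; simp; positivity
      · rw [max_eq_left h, hℓa]; apply le_of_eq; ring
    have h3 : (max ℓ (b * M) - b * M) ^ 2 / s ^ 2 ≤ ((a - b) * M) ^ 2 / s ^ 2 := by gcongr
    linarith
  · apply Finset.sum_le_sum
    intro j _
    have := hp j
    split_ifs with h1 h2 h2
    · exact le_rfl
    · exact absurd ((le_max_left _ _).trans h1) h2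
    · exact this
    · exact le_rfl
end

section
/- Let A be a set of m ≤ n/4 elements drawn uniformly without replacement from n elements, with β = k/n satisfying 4ε ≤ β ≤ 1/2, m·β ≥ 8, and k ≥ 200. Let u be the r-th smallest element of A. If r ≤ ⌈β·m⌉, then the probability that u has rank at most k - nε in the original set (i.e., u is 'small') is at least η·e^{-12·ε²·m/(β(1-β))}, where η = √(π/320)·e^{-24}. -/
open Finset in
lemma hyp_rec (K L m j : ℕ) (hj : j < m) :
    ((K.choose (j+1) : ℝ) * (L.choose (m-(j+1)) : ℝ)) * (((j:ℝ)+1) * ((L:ℝ) - m + j + 1))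
      = ((K.choose j : ℝ) * (L.choose (m-j) : ℝ)) * (((K:ℝ) - j) * ((m:ℝ) - j)) := by
  have h1 : (K.choose (j+1) : ℝ) * ((j:ℝ)+1) = K.choose j * ((K:ℝ) - j) := by
    have h := Nat.choose_succ_right_eq K j
    by_cases hk : j ≤ K
    · have h2 : ((K.choose (j+1) * (j+1) : ℕ) : ℝ) = ((K.choose j * (K - j) : ℕ) : ℝ) := by rw [h]
      push_cast [Nat.cast_sub hk] at h2
      exact h2
    · rw [Nat.choose_eq_zero_of_lt (by omega : K < j), Nat.choose_eq_zero_of_lt (by omega : K < j+1)]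
      simp
  have h3 : (L.choose (m-j) : ℝ) * ((m:ℝ) - j)
      = L.choose (m-(j+1)) * ((L:ℝ) - m + j + 1) := by
    obtain ⟨d, rfl⟩ : ∃ d, m = j + d + 1 := ⟨m - j - 1, by omega⟩
    have e1 : j + d + 1 - j = d + 1 := by omega
    have e2 : j + d + 1 - (j + 1) = d := by omega
    rw [e1, e2]
    have h := Nat.choose_succ_right_eq L d
    by_cases hk : d ≤ L
    · have h2 : ((L.choose (d+1) * (d+1) : ℕ) : ℝ) = ((L.choose d * (L - d) : ℕ) : ℝ) := by rw [h]
      push_cast [Nat.cast_sub hk] at h2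
      push_cast
      linarith
    · rw [Nat.choose_eq_zero_of_lt (by omega : L < d), Nat.choose_eq_zero_of_lt (by omega : L < d+1)]
      simp
  linear_combination ((L.choose (m-(j+1)) : ℝ)) * ((L:ℝ) - m + j + 1) * h1
    - (K.choose j : ℝ) * ((K:ℝ) - j) * h3

lemma hyp_sum (K L m : ℕ) :
    ∑ j ∈ Finset.range (m+1), ((K.choose j : ℝ) * (L.choose (m-j) : ℝ)) = ((K+L).choose m : ℝ) := by
  rw [Nat.add_choose_eq, Finset.Nat.sum_antidiagonal_eq_sum_range_succ_mk]
  push_cast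
  rfl

/-- shifted summation -/
lemma hyp_shift (p g : ℕ → ℝ) (m : ℕ) (K N : ℝ)
    (hrec : ∀ j < m, p (j+1) * (((j:ℝ)+1) * (N - K - m + j + 1)) = p j * ((K - j) * ((m:ℝ) - j))) :
    ∑ j ∈ Finset.range (m+1), p j * (g j * (j * (N - K - m + j)))
      = ∑ j ∈ Finset.range (m+1), p j * (g (j+1) * ((K - j) * ((m:ℝ) - j))) := by
  rw [Finset.sum_range_succ', Finset.sum_range_succ _ m]
  simp only [Nat.cast_zero, zero_mul, mul_zero, sub_self, add_zero]
  apply Finset.sum_congr rfl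
  intro j hj
  have := hrec j (Finset.mem_range.1 hj)
  push_cast
  linear_combination g (j+1) * this

lemma hyp_mean (p : ℕ → ℝ) (m : ℕ) (K N : ℝ)
    (hrec : ∀ j < m, p (j+1) * (((j:ℝ)+1) * (N - K - m + j + 1)) = p j * ((K - j) * ((m:ℝ) - j)))
    (hs : ∑ j ∈ Finset.range (m+1), p j = 1) :
    N * ∑ j ∈ Finset.range (m+1), p j * j = K * m := by
  have h := hyp_shift p (fun _ => 1) m K N hrec
  have h2 : ∑ j ∈ Finset.range (m+1), (p j * (1 * (j * (N - K - m + j)))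
      - p j * (1 * ((K - j) * ((m:ℝ) - j)))) = 0 := by
    rw [Finset.sum_sub_distrib]; simpa [sub_eq_zero] using h
  have h3 : ∑ j ∈ Finset.range (m+1), (p j * (1 * (j * (N - K - m + j)))
      - p j * (1 * ((K - j) * ((m:ℝ) - j))))
      = N * ∑ j ∈ Finset.range (m+1), p j * j - K * m * ∑ j ∈ Finset.range (m+1), p j := by
    rw [Finset.mul_sum, Finset.mul_sum, ← Finset.sum_sub_distrib]
    exact Finset.sum_congr rfl fun j _ => by ring
  rw [hs] at h3
  linarith

lemma hyp_sq (p : ℕ → ℝ) (m : ℕ) (K N : ℝ)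
    (hrec : ∀ j < m, p (j+1) * (((j:ℝ)+1) * (N - K - m + j + 1)) = p j * ((K - j) * ((m:ℝ) - j)))
    (hs : ∑ j ∈ Finset.range (m+1), p j = 1) :
    (N - 1) * ∑ j ∈ Finset.range (m+1), p j * (j:ℝ)^2
      = (K * m - K - m) * ∑ j ∈ Finset.range (m+1), p j * j + K * m := by
  have h := hyp_shift p (fun j => (j:ℝ)) m K N hrec
  have h2 : ∑ j ∈ Finset.range (m+1), (p j * ((j:ℝ) * (j * (N - K - m + j)))
      - p j * (((j+1 : ℕ):ℝ) * ((K - j) * ((m:ℝ) - j)))) = 0 := by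
    rw [Finset.sum_sub_distrib]; simpa [sub_eq_zero] using h
  have h3 : ∑ j ∈ Finset.range (m+1), (p j * ((j:ℝ) * (j * (N - K - m + j)))
      - p j * (((j+1 : ℕ):ℝ) * ((K - j) * ((m:ℝ) - j))))
      = (N - 1) * ∑ j ∈ Finset.range (m+1), p j * (j:ℝ)^2
        - (K * m - K - m) * ∑ j ∈ Finset.range (m+1), p j * j
        - K * m * ∑ j ∈ Finset.range (m+1), p j := by
    rw [Finset.mul_sum, Finset.mul_sum, Finset.mul_sum, ← Finset.sum_sub_distrib,
      ← Finset.sum_sub_distrib]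
    exact Finset.sum_congr rfl fun j _ => by push_cast; ring
  rw [hs] at h3
  linarith

/-- second moment around a point close to the mean -/
lemma hyp_var (p : ℕ → ℝ) (m : ℕ) (K N c : ℝ) (hN : 1 < N) (hK : 1 ≤ K)
    (hrec : ∀ j < m, p (j+1) * (((j:ℝ)+1) * (N - K - m + j + 1)) = p j * ((K - j) * ((m:ℝ) - j)))
    (hs : ∑ j ∈ Finset.range (m+1), p j = 1) (hm1 : 1 ≤ (m:ℝ)) (hKN : K ≤ N)
    (hc1 : c ≤ K * m / N + 1) (hc2 : K * m / N - 1 ≤ c) :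
    ∑ j ∈ Finset.range (m+1), p j * ((j:ℝ) - c)^2 ≤ K * m / N + 1 := by
  have h1 := hyp_mean p m K N hrec hs
  have h2 := hyp_sq p m K N hrec hs
  set E1 := ∑ j ∈ Finset.range (m+1), p j * (j:ℝ) with hE1
  set E2 := ∑ j ∈ Finset.range (m+1), p j * (j:ℝ)^2 with hE2
  have hexp : ∑ j ∈ Finset.range (m+1), p j * ((j:ℝ) - c)^2 = E2 - 2 * c * E1 + c^2 := by
    have : c^2 = c^2 * ∑ j ∈ Finset.range (m+1), p j := by rw [hs, mul_one]
    rw [this, hE1, hE2, Finset.mul_sum, Finset.mul_sum, ← Finset.sum_sub_distrib,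
      ← Finset.sum_add_distrib]
    exact Finset.sum_congr rfl fun j _ => by ring
  have hmu : K * m / N = E1 := by
    rw [div_eq_iff (by linarith)]; linarith
  rw [hmu] at hc1 hc2 ⊢
  rw [hexp]
  have hE1m : E1 + 1 ≤ K + m := by
    have : E1 ≤ m := by
      rw [← hmu, div_le_iff₀ (by linarith)]; nlinarith
    linarith
  have hE1p : 0 ≤ E1 := by rw [← hmu]; apply div_nonneg <;> nlinarith
  have hE2b : E2 ≤ E1^2 + E1 := by
    have : (N-1) * E2 ≤ (N-1) * (E1^2+E1) := by
      rw [h2, ← h1]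
      nlinarith
    exact le_of_mul_le_mul_left this (by linarith)
  nlinarith

lemma hyp_cheb (p : ℕ → ℝ) (hp : ∀ j, 0 ≤ p j) (m M T : ℕ) (V : ℝ) (hT : 1 ≤ T)
    (hs : ∑ j ∈ Finset.range (m+1), p j = 1)
    (hV : ∑ j ∈ Finset.range (m+1), p j * ((j:ℝ) - M)^2 ≤ V)
    (hVT : 2 * V ≤ (T:ℝ)^2)
    (hmax : ∀ j ≤ m, p j ≤ p M) : 1 / 2 ≤ (2 * T) * p M := by
  have hT0 : (0:ℝ) < T := by exact_mod_cast hT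
  have hpt : ∀ j ∈ Finset.range (m+1),
      p j ≤ p j * ((j:ℝ) - M)^2 / T^2 + (if j ∈ Finset.Ico (M+1-T) (M+T) then p M else 0) := by
    intro j hj
    have hj' : j ≤ m := by have := Finset.mem_range.1 hj; omega
    split_ifs with h
    · have := hmax j hj'
      have : 0 ≤ p j * ((j:ℝ) - M)^2 / T^2 := by have := hp j; positivity
      linarith
    · rw [add_zero, le_div_iff₀ (by positivity)]
      apply mul_le_mul_of_nonneg_left _ (hp j)
      rw [Finset.mem_Ico] at h
      have : j + T ≤ M ∨ M + T ≤ j := by omega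
      rcases this with h | h
      · have h : (j:ℝ) + T ≤ M := by exact_mod_cast h
        nlinarith
      · have h : (M:ℝ) + T ≤ j := by exact_mod_cast h
        nlinarith
  have h := Finset.sum_le_sum hpt
  rw [hs, Finset.sum_add_distrib, ← Finset.sum_div] at h
  have h1 : (∑ j ∈ Finset.range (m+1), p j * ((j:ℝ) - M)^2) / (T:ℝ)^2 ≤ 1/2 := by
    rw [div_le_iff₀ (by positivity)]; linarith
  have h2 : ∑ j ∈ Finset.range (m+1), (if j ∈ Finset.Ico (M+1-T) (M+T) then p M else 0)
      ≤ (2 * T) * p M := by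
    rw [← Finset.sum_filter, Finset.sum_const, nsmul_eq_mul]
    apply mul_le_mul_of_nonneg_right _ (hp M)
    have : (Finset.filter (fun j => j ∈ Finset.Ico (M+1-T) (M+T)) (Finset.range (m+1))).card ≤ 2 * T := by
      calc _ ≤ (Finset.Ico (M+1-T) (M+T)).card := by
            apply Finset.card_le_card
            intro x hx
            exact (Finset.mem_filter.1 hx).2
        _ ≤ 2 * T := by rw [Nat.card_Ico]; omega
    exact_mod_cast this
  linarith

lemma hyp_step_le (a b D N' : ℝ) (h : b * D = a * N') (ha : 0 ≤ a) (hD : 0 < D) (hN : N' ≤ D) :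
    b ≤ a := by
  have : b * D ≤ a * D := by rw [h]; exact mul_le_mul_of_nonneg_left hN ha
  exact le_of_mul_le_mul_right this hD

lemma hyp_step_ge (a b D N' : ℝ) (h : b * D = a * N') (ha : 0 ≤ a) (hD : 0 < D) (hN : D ≤ N') :
    a ≤ b := by
  have : a * D ≤ b * D := by rw [h]; exact mul_le_mul_of_nonneg_left hN ha
  exact le_of_mul_le_mul_right this hD

lemma hyp_step_exp (a b D N' c : ℝ) (h : b * D = a * N') (hb : 0 ≤ b) (hN0 : 0 < N')
    (hN : D ≤ (1 + c) * N') : a * Real.exp (-c) ≤ b := by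
  have h1 : a ≤ b * (1 + c) := by
    have : a * N' ≤ b * (1 + c) * N' := by
      rw [← h, mul_assoc]; exact mul_le_mul_of_nonneg_left hN hb
    exact le_of_mul_le_mul_right this hN0
  have h2 : a ≤ b * Real.exp c :=
    h1.trans (mul_le_mul_of_nonneg_left (by linarith [Real.add_one_le_exp c]) hb)
  rw [Real.exp_neg, ← div_eq_mul_inv, div_le_iff₀ (Real.exp_pos c)]
  exact h2

lemma hyp_chain (p : ℕ → ℝ) (M d : ℕ) (c : ℝ)
    (h : ∀ j, M ≤ j → j < M + d → p j * Real.exp (-c) ≤ p (j+1)) :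
    p M * Real.exp (-(c * d)) ≤ p (M + d) := by
  induction d with
  | zero => simp
  | succ d ih =>
    have h1 := ih (fun j hj hj2 => h j hj (by omega))
    have h2 := h (M+d) (by omega) (by omega)
    have : Real.exp (-(c * ((d+1 : ℕ):ℝ))) = Real.exp (-(c*d)) * Real.exp (-c) := by
      rw [← Real.exp_add]; congr 1; push_cast; ring
    rw [this, ← mul_assoc]
    exact (mul_le_mul_of_nonneg_right h1 (Real.exp_pos _).le).trans h2

lemma mono_up (p : ℕ → ℝ) (M : ℕ) (h : ∀ j < M, p j ≤ p (j+1)) (j : ℕ) (hj : j ≤ M) : p j ≤ p M := by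
  induction M with
  | zero => have : j = 0 := by omega
            rw [this]
  | succ M ih =>
    rcases Nat.lt_or_ge M j with h1 | h1
    · have : j = M + 1 := by omega
      rw [this]
    · exact (ih (fun i hi => h i (by omega)) h1).trans (h M (by omega))

lemma mono_down (p : ℕ → ℝ) (a d : ℕ) (h : ∀ j, a ≤ j → j < a + d → p (j+1) ≤ p j) :
    p (a + d) ≤ p a := by
  induction d with
  | zero => simp
  | succ d ih => exact (h (a+d) (by omega) (by omega)).trans (ih (fun i hi h2 => h i hi (by omega)))

set_option maxHeartbeats 4000000 in

/-- Sampling lemma: `A` consists of `m ≤ n/4` elements drawn without replacement,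
`β = k/n` with `4ε ≤ β ≤ 1/2`, `mβ ≥ 8`, `k ≥ 200`. The number of small elements in
`A` is `Hypergeometric(n, K, m)` with `K = (β-ε)n`. If `r ≤ ⌈βm⌉` then the
`r`-th smallest element of `A` is small (i.e. at least `r` of the sampled elements
are small) with probability at least `√(π/320)·e⁻²⁴·e^{-12ε²m/(β(1-β))}`. -/
theorem sampling_lemma_small (n k m r K : ℕ) (ε : ℝ) (hε : 0 < ε)
    (hm : (m:ℝ) ≤ (n:ℝ)/4)
    (hβ1 : 4*ε ≤ (k:ℝ)/n) (hβ2 : (k:ℝ)/n ≤ 1/2)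
    (hmβ : 8 ≤ (m:ℝ) * ((k:ℝ)/n))
    (hk : 200 ≤ k)
    (hK : (K:ℝ) = ((k:ℝ)/n - ε) * n)
    (hr0 : 1 ≤ r) (hr : (r:ℝ) ≤ (⌈((k:ℝ)/n) * m⌉ : ℤ)) :
    Real.sqrt (Real.pi / 320) * Real.exp (-24)
      * Real.exp (-12 * ε^2 * m / (((k:ℝ)/n) * (1 - (k:ℝ)/n)))
    ≤ ∑ j ∈ Finset.Icc r m,
        (K.choose j * (n - K).choose (m - j) : ℝ) / (n.choose m) := by
  set β : ℝ := (k:ℝ)/n with hβ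
  have hkR : (200:ℝ) ≤ k := by exact_mod_cast hk
  have hn0 : (0:ℝ) < n := by
    rcases Nat.eq_zero_or_pos n with h | h
    · subst h; simp [hβ] at hmβ; linarith
    · exact_mod_cast h
  have hβn : β * n = k := by rw [hβ]; field_simp
  have hβ0 : 0 < β := by rw [hβ]; positivity
  have hn400 : (400:ℝ) ≤ n := by nlinarith
  have hm16 : (16:ℝ) ≤ m := by nlinarith [(Nat.cast_nonneg m : (0:ℝ) ≤ m)]
  have hKlo : 3/4 * (k:ℝ) ≤ K := by rw [hK]; nlinarith
  have hKhi : (K:ℝ) ≤ k := by rw [hK]; nlinarith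
  have hkn : (k:ℝ) ≤ n / 2 := by rw [← hβn]; nlinarith
  have hKn : K ≤ n := by
    have : (K:ℝ) ≤ n := by linarith
    exact_mod_cast this
  -- the distribution
  have hCpos : (0:ℝ) < n.choose m := by
    have : m ≤ n := by
      have : (m:ℝ) ≤ n := by linarith
      exact_mod_cast this
    exact_mod_cast Nat.choose_pos this
  set p : ℕ → ℝ := fun j => (K.choose j * (n - K).choose (m - j) : ℝ) / (n.choose m) with hp
  have hp0 : ∀ j, 0 ≤ p j := fun j => by simp only [hp]; positivity
  have hrec : ∀ j < m, p (j+1) * (((j:ℝ)+1) * ((n:ℝ) - K - m + j + 1))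
      = p j * (((K:ℝ) - j) * ((m:ℝ) - j)) := by
    intro j hj
    have h := hyp_rec K (n-K) m j hj
    rw [Nat.cast_sub hKn] at h
    simp only [hp]
    rw [div_mul_eq_mul_div, div_mul_eq_mul_div, h]
  have hs : ∑ j ∈ Finset.range (m+1), p j = 1 := by
    simp only [hp]
    rw [← Finset.sum_div, hyp_sum, Nat.add_sub_cancel' hKn, div_self hCpos.ne']
  -- the scale
  set S : ℝ := β * m with hS
  have hS8 : 8 ≤ S := by rw [hS]; linarith
  set s : ℝ := √S with hsdef
  have hss : s^2 = S := Real.sq_sqrt (by linarith)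
  have hs28 : 2.8 ≤ s := by
    rw [hsdef]; apply Real.le_sqrt_of_sq_le; norm_num; linarith
  have hSm : S ≤ m / 2 := by rw [hS]; nlinarith
  have hSk : S * n = k * m := by rw [hS, ← hβn]; ring
  have hSK : 3 * S ≤ K := by
    have : 4 * S ≤ k := by rw [hS, ← hβn]; nlinarith
    linarith
  -- mean
  set μ : ℝ := (K:ℝ) * m / n with hμ
  have hμS : μ = S - ε * m := by
    rw [hμ, hK, hS]; field_simp
  have hμn : μ * n = K * m := by rw [hμ]; field_simp
  -- mode
  set M : ℕ := (K+1)*(m+1)/(n+2) with hM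
  have hM1 : (M:ℝ) * (n+2) ≤ (K+1)*(m+1) := by
    have := Nat.div_mul_le_self ((K+1)*(m+1)) (n+2)
    exact_mod_cast this
  have hM2 : ((K:ℝ)+1)*(m+1) < (M+1) * (n+2) := by
    have := Nat.lt_div_mul_add (a := (K+1)*(m+1)) (b := n+2) (by omega)
    have h : (K+1)*(m+1) < (M+1) * (n+2) := by rw [hM]; linarith
    exact_mod_cast h
  have hμ0 : 0 ≤ μ := by positivity
  have hμm : μ ≤ m := by
    rw [hμ, div_le_iff₀ hn0]; nlinarith
  have hμS' : μ ≤ S := by rw [hμS]; nlinarith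
  have hMlo : μ - 1 ≤ M := by
    have : μ * (n+2) ≤ (M+1) * (n+2) := by
      have : μ * 2 ≤ m + K + 1 := by linarith
      linarith
    have := le_of_mul_le_mul_right this (by linarith : (0:ℝ) < n+2)
    linarith
  have hMhi : (M:ℝ) ≤ μ + 1 := by
    have : (M:ℝ) * (n+2) ≤ (μ+1) * (n+2) := by linarith
    exact le_of_mul_le_mul_right this (by linarith : (0:ℝ) < n+2)
  have hMhi' : (M:ℝ) < S + 1 := by
    have h1 : 0 < ε * m := by positivity
    rw [hμS] at hMhi
    linarith
  have hMm : M ≤ m := by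
    have : (M:ℝ) ≤ m := by linarith
    exact_mod_cast this
  have hDpos : ∀ j : ℕ, 0 < ((j:ℝ)+1) * ((n:ℝ) - K - m + j + 1) := by
    intro j
    have : (0:ℝ) ≤ j := Nat.cast_nonneg j
    apply mul_pos <;> linarith
  have hid : ∀ j : ℕ, ((j:ℝ)+1) * ((n:ℝ) - K - m + j + 1) - ((K:ℝ) - j) * ((m:ℝ) - j)
      = (j+1) * (n+2) - (K+1)*(m+1) := fun j => by ring
  have hdown : ∀ j, M ≤ j → j < m → p (j+1) ≤ p j := by
    intro j h1 h2
    apply hyp_step_le _ _ _ _ (hrec j h2) (hp0 j) (hDpos j)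
    have h1 : (M:ℝ) + 1 ≤ j + 1 := by exact_mod_cast Nat.succ_le_succ h1
    have h3 := mul_le_mul_of_nonneg_right h1 (by linarith : (0:ℝ) ≤ (n:ℝ) + 2)
    have := hid j
    linarith
  have hup : ∀ j < M, p j ≤ p (j+1) := by
    intro j h1
    apply hyp_step_ge _ _ _ _ (hrec j (by omega)) (hp0 j) (hDpos j)
    have h1 : (j:ℝ) + 1 ≤ M := by exact_mod_cast h1
    have h3 := mul_le_mul_of_nonneg_right h1 (by linarith : (0:ℝ) ≤ (n:ℝ) + 2)
    have := hid j
    linarith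
  have hanti : ∀ a b, M ≤ a → a ≤ b → b ≤ m → p b ≤ p a := by
    intro a b h1 h2 h3
    obtain ⟨d, rfl⟩ := Nat.exists_eq_add_of_le h2
    exact mono_down p a d (fun j hj hj2 => hdown j (by omega) (by omega))
  have hmax : ∀ j ≤ m, p j ≤ p M := by
    intro j hj
    rcases le_total j M with h | h
    · exact mono_up p M hup j h
    · exact hanti M j le_rfl h hj
  -- lower bound at the mode
  have hV := hyp_var p m K n M (by linarith) (by linarith) hrec hs (by linarith) (by linarith)
    hMhi hMlo
  have hpM : 1 ≤ 10 * s * p M := by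
    have hT := hyp_cheb p hp0 m M ⌈2*s⌉₊ (S+1) (Nat.one_le_ceil_iff.2 (by linarith)) hs
      (hV.trans (by linarith)) (by
        have : 2 * s ≤ (⌈2*s⌉₊:ℝ) := Nat.le_ceil _
        have h15 := mul_self_le_mul_self (by linarith : 0 ≤ 2 * s) this
        linarith) hmax
    have hc : (⌈2*s⌉₊:ℝ) < 2*s + 1 := Nat.ceil_lt_add_one (by linarith)
    have h9 : 2 * (⌈2*s⌉₊:ℝ) ≤ 5 * s := by linarith
    have h10 := mul_le_mul_of_nonneg_right h9 (hp0 M)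
    linarith
  -- threshold
  set R : ℕ := ⌈S⌉₊ with hR
  have hRlo : S ≤ R := Nat.le_ceil _
  have hRhi : (R:ℝ) < S + 1 := Nat.ceil_lt_add_one (by linarith)
  have hrR : r ≤ R := by
    have h1 : ((R:ℕ):ℤ) = ⌈S⌉ := Int.natCast_ceil_eq_ceil (by linarith)
    rw [← h1] at hr
    exact_mod_cast hr
  have hMR : M ≤ R := by
    have : (M:ℝ) < R + 1 := by linarith
    have : M < R + 1 := by exact_mod_cast this
    omega
  set h : ℕ := ⌊s/4⌋₊ with hh
  have hhlo : s/4 < h + 1 := Nat.lt_floor_add_one _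
  have hhhi : (h:ℝ) ≤ s/4 := Nat.floor_le (by linarith)
  have hJ : ((R + h : ℕ):ℝ) ≤ 1.22 * S := by
    have h14 : 2.8 * s ≤ S := by
      rw [← hss, sq]; exact mul_le_mul_of_nonneg_right hs28 (by linarith)
    push_cast; linarith
  have hJ2 : ((R + h : ℕ):ℝ) ≤ S + 1 + s/4 := by push_cast; linarith
  generalize hJdef : R + h = J at hJ hJ2
  have hJm : J ≤ m := by
    have : (J:ℝ) ≤ m := by linarith
    exact_mod_cast this
  have hsum : (h + 1) * p J ≤ ∑ j ∈ Finset.Icc r m, p j := by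
    calc (h + 1) * p J = ∑ j ∈ Finset.Icc R J, p J := by
          rw [Finset.sum_const, Nat.card_Icc, nsmul_eq_mul]
          have : J + 1 - R = h + 1 := by omega
          rw [this]; push_cast; ring
      _ ≤ ∑ j ∈ Finset.Icc R J, p j := by
          apply Finset.sum_le_sum
          intro j hj
          rw [Finset.mem_Icc] at hj
          exact hanti j J (by omega) hj.2 hJm
      _ ≤ _ := by
          apply Finset.sum_le_sum_of_subset_of_nonneg
          · intro j hj
            rw [Finset.mem_Icc] at hj ⊢
            omega
          · intro j _ _; exact hp0 j
  -- ratio chain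
  set X : ℝ := ε * m + 1 + s/4 with hX
  have hXpos : 0 < X := by have : 0 < ε * m := by positivity
                           linarith
  have hcoef : S * (n+2) ≤ 6 * (((K:ℝ) - J) * (m - J)) := by
    have h1 : 0.444 * (k:ℝ) ≤ K - J := by linarith
    have h2 : 0.39 * (m:ℝ) ≤ m - J := by linarith
    have h3 : (0.444 * (k:ℝ)) * (0.39 * m) ≤ (K - J) * (m - J) :=
      mul_le_mul h1 h2 (by positivity) (by linarith)
    have h4 : S * (n+2) ≤ 1.005 * (k * m) := by
      rw [← hSk]
      have h5 : S * 400 ≤ S * n := mul_le_mul_of_nonneg_left hn400 (by linarith)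
      linarith
    have h6 : 0 ≤ (k:ℝ) * m := by positivity
    linarith
  have hstep : ∀ j, M ≤ j → j < J → p j * Real.exp (-(6 * X / S)) ≤ p (j+1) := by
    intro j h1 h2
    have hjJ : (j:ℝ) + 1 ≤ J := by exact_mod_cast h2
    have hA : 0 < (K:ℝ) - j := by linarith
    have hB : 0 < (m:ℝ) - j := by linarith
    apply hyp_step_exp _ _ _ _ _ (hrec j (by omega)) (hp0 _) (mul_pos hA hB)
    have e := hid j
    have hnum : ((j:ℝ)+1) * (n+2) - (K+1)*(m+1) ≤ X * (n+2) := by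
      have : ((j:ℝ)+1) ≤ μ + X := by rw [hμS, hX]; linarith
      have h5 : ((j:ℝ)+1) * (n+2) ≤ (μ + X) * (n+2) :=
        mul_le_mul_of_nonneg_right this (by linarith)
      have h6 : 2 * μ ≤ K + m + 1 := by linarith
      linarith
    have hden : ((K:ℝ) - J) * (m - J) ≤ (K - j) * (m - j) := by
      apply mul_le_mul <;> linarith
    have hfin : X * (n+2) ≤ 6 * X / S * ((K - j) * (m - j)) := by
      rw [div_mul_eq_mul_div, le_div_iff₀ (by linarith)]
      have h7 : S * (n+2) ≤ 6 * (((K:ℝ) - j) * (m - j)) := by linarith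
      have h8 := mul_le_mul_of_nonneg_left h7 hXpos.le
      linarith
    linarith
  have hchain : p M * Real.exp (-(6 * X / S * (X + 1))) ≤ p J := by
    obtain ⟨d, hd⟩ := Nat.exists_eq_add_of_le (show M ≤ J by omega)
    have h1 := hyp_chain p M d (6 * X / S) (fun j h1 h2 => hstep j h1 (by omega))
    rw [← hd] at h1
    refine le_trans (mul_le_mul_of_nonneg_left (Real.exp_le_exp.2 ?_) (hp0 M)) h1
    apply neg_le_neg
    apply mul_le_mul_of_nonneg_left _ (by positivity)
    have : (J:ℝ) = M + d := by exact_mod_cast hd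
    rw [hX]
    linarith
  have hcost : 6 * X / S * (X + 1) ≤ 12 * (ε * m)^2 / S + 12 := by
    rw [div_mul_eq_mul_div, div_le_iff₀ (by linarith), add_mul, div_mul_cancel₀ _ (by linarith)]
    have h1 : X * (X+1) ≤ (ε * m + s)^2 := by
      have : X + 1/2 ≤ ε * m + s := by rw [hX]; linarith
      have h12 := mul_self_le_mul_self (by linarith : 0 ≤ X + 1/2) this
      linarith
    have h13 := sq_nonneg (ε * m - s)
    linarith
  have hexp : -12 * ε^2 * m / (β * (1 - β)) ≤ -(12 * (ε * m)^2 / S) := by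
    have : 12 * (ε * m)^2 / S = 12 * ε^2 * m / β := by
      rw [hS]; field_simp
    rw [this, neg_mul, neg_mul, neg_div, neg_le_neg_iff]
    apply div_le_div_of_nonneg_left (by positivity)
    · apply mul_pos hβ0; linarith
    · nlinarith
  -- conclusion
  have hsqrt : √(Real.pi / 320) ≤ 1/10 := by
    rw [Real.sqrt_le_iff]
    constructor
    · norm_num
    · have := Real.pi_lt_d2
      linarith
  have hE : Real.exp (-24) ≤ 1/4 * Real.exp (-12) := by
    have h1 : Real.exp (-24) = Real.exp (-12) * Real.exp (-12) := by
      rw [← Real.exp_add]; norm_num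
    have h2 : Real.exp (-12) ≤ 1/4 := by
      rw [Real.exp_neg, inv_le_comm₀ (Real.exp_pos _) (by norm_num)]
      have := Real.add_one_le_exp (12:ℝ)
      linarith
    rw [h1]
    exact mul_le_mul_of_nonneg_right h2 (Real.exp_pos _).le
  refine le_trans ?_ hsum
  set Q := Real.exp (-(12 * (ε * m)^2 / S)) with hQ
  have hQ0 : 0 < Q := Real.exp_pos _
  have hpJ : p M * (Real.exp (-12) * Q) ≤ p J := by
    refine le_trans (mul_le_mul_of_nonneg_left ?_ (hp0 M)) hchain
    rw [hQ, ← Real.exp_add]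
    apply Real.exp_le_exp.2
    linarith
  have hL : √(Real.pi / 320) * Real.exp (-24) * Real.exp (-12 * ε^2 * m / (β * (1 - β)))
      ≤ (1/10) * (1/4 * Real.exp (-12)) * Q := by
    apply mul_le_mul _ (Real.exp_le_exp.2 hexp) (Real.exp_pos _).le (by positivity)
    exact mul_le_mul hsqrt hE (Real.exp_pos _).le (by norm_num)
  refine hL.trans ?_
  have hW : 0 < Real.exp (-12) * Q := mul_pos (Real.exp_pos _) hQ0
  have h1 : s/4 * (p M * (Real.exp (-12) * Q)) ≤ (h+1) * p J :=
    mul_le_mul hhlo.le hpJ (mul_nonneg (hp0 M) hW.le) (by positivity)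
  refine le_trans ?_ h1
  have h11 := mul_le_mul_of_nonneg_right hpM hW.le
  linarith
end
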